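/- Let F be a field and let f(x_1,...,x_n) = a_1 x_1^k + ... + a_n x_n^k + g(x_1,...,x_n) be a polynomial over F, where k is a positive integer with n ≤ k, a_1,...,a_n are nonzero elements of F, and g is a polynomial of total degree less than k. Let A_1,...,A_n be finite subsets of F with |A_i| ≥ i for i = 1,...,n. Then the restricted value set V = {f(x_1,...,x_n) : x_1 ∈ A_1, ..., x_n ∈ A_n, and x_i ≠ x_j whenever i ≠ j} satisfies |V| ≥ min{p(F), ⌊(|A_1|-1)/k⌋ + ⌊(|A_2|-2)/k⌋ + ... + ⌊(|A_n|-n)/k⌋ + 1}. -/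

import Mathlib

/-- `p(F)`: the characteristic of `F` if positive, `+∞` if `F` has characteristic zero,
as an extended natural number. -/
noncomputable def fieldCharE (F : Type*) [Field F] : ℕ∞ :=
  if ringChar F = 0 then ⊤ else (ringChar F : ℕ∞)

/-! Let `V` be a set of `N` elements of `F` with `N < p(F)` and `N ≤ ∑ ⌊(|A_i| - i) / k⌋`. The
polynomial `(∏ v ∈ V, (f - v)) * ∏ i < j, (x_j - x_i)` vanishes at `x` unless `x` has distinct
coordinates and `f(x) ∉ V`, so by the combinatorial Nullstellensatz it suffices to find a nonzero
coefficient of top degree. The leading form is `(∑ a_i x_i^k)^N` times the Vandermonde determinant.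
Counting coordinates from `0`, each `x_i` has exponent less than `n ≤ k` in every Vandermonde term,
so division by `k` shows that `∏ x_i^(k q_i + i)` with `∑ q_i = N` arises only from the identity
permutation. Its coefficient is a multinomial coefficient times `∏ a_i^(q_i)`; this is nonzero
because `N!` is. -/

section RingChar

/-- The characteristic of a semiring as an extended natural number, equal to `⊤` in characteristic
zero. It plays the role of `fieldCharE` when the coefficients are not assumed to form a field. -/
noncomputable def ringCharE (R : Type*) [NonAssocSemiring R] : ℕ∞ :=
  if ringChar R = 0 then ⊤ else (ringChar R : ℕ∞)

open scoped Nat in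
theorem natCast_factorial_ne_zero_of_lt_ringCharE {R : Type*} [Semiring R] [NoZeroDivisors R]
    [Nontrivial R] {N : ℕ} (hN : (N : ℕ∞) < ringCharE R) : (N ! : R) ≠ 0 := by
  rw [Ne, ringChar.spec]
  rcases CharP.char_is_prime_or_zero R (ringChar R) with hprime | hzero
  · rw [ringCharE, if_neg hprime.ne_zero, Nat.cast_lt] at hN
    rwa [hprime.dvd_factorial, not_le]
  · rw [hzero, zero_dvd_iff]
    exact N.factorial_ne_zero

end RingChar

section LeadingForm

open MvPolynomial

variable {σ R : Type*} [CommSemiring R]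

theorem homogeneousComponent_mul_of_totalDegree_le {p q : MvPolynomial σ R} {m n : ℕ}
    (hp : p.totalDegree ≤ m) (hq : q.totalDegree ≤ n) :
    homogeneousComponent (m + n) (p * q) =
      homogeneousComponent m p * homogeneousComponent n q := by
  classical
  ext d
  by_cases hd : d.degree = m + n
  · rw [coeff_homogeneousComponent, if_pos hd, coeff_mul, coeff_mul]
    refine Finset.sum_congr rfl fun ⟨b, c⟩ hbc ↦ ?_
    have hdeg : b.degree + c.degree = m + n := by
      rw [← map_add, Finset.HasAntidiagonal.mem_antidiagonal.1 hbc, hd]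
    simp only [coeff_homogeneousComponent]
    rcases lt_trichotomy b.degree m with hb | hb | hb
    · have hc : q.totalDegree < c.degree := by lia
      rw [coeff_eq_zero_of_totalDegree_lt hc, if_neg hb.ne, mul_zero, zero_mul]
    · rw [if_pos hb, if_pos (by lia)]
    · rw [coeff_eq_zero_of_totalDegree_lt (hp.trans_lt hb), if_neg hb.ne', zero_mul, zero_mul]
  · rw [(homogeneousComponent_isHomogeneous _ _).coeff_eq_zero hd,
      ((homogeneousComponent_isHomogeneous m p).mul
        (homogeneousComponent_isHomogeneous n q)).coeff_eq_zero hd]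

theorem homogeneousComponent_prod_of_totalDegree_le {ι : Type*} (s : Finset ι)
    (p : ι → MvPolynomial σ R) (d : ι → ℕ) (hp : ∀ i ∈ s, (p i).totalDegree ≤ d i) :
    homogeneousComponent (∑ i ∈ s, d i) (∏ i ∈ s, p i) =
      ∏ i ∈ s, homogeneousComponent (d i) (p i) := by
  induction s using Finset.cons_induction with
  | empty => simp
  | cons i s hi ih =>
    rw [Finset.forall_mem_cons] at hp
    have hs : (∏ j ∈ s, p j).totalDegree ≤ ∑ j ∈ s, d j :=
      (totalDegree_finsetProd _ _).trans (Finset.sum_le_sum hp.2)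
    rw [Finset.sum_cons, Finset.prod_cons, Finset.prod_cons,
      homogeneousComponent_mul_of_totalDegree_le hp.1 hs, ih hp.2]

theorem totalDegree_add_le_of_isHomogeneous {p g : MvPolynomial σ R} {k : ℕ}
    (hp : p.IsHomogeneous k) (hg : g.totalDegree < k) : (p + g).totalDegree ≤ k :=
  (totalDegree_add p g).trans (max_le hp.totalDegree_le hg.le)

theorem homogeneousComponent_add_of_isHomogeneous {p g : MvPolynomial σ R} {k : ℕ}
    (hp : p.IsHomogeneous k) (hg : g.totalDegree < k) : homogeneousComponent k (p + g) = p := by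
  rw [map_add, homogeneousComponent_eq_self hp, homogeneousComponent_eq_zero k g hg, add_zero]

end LeadingForm

section RestrictedValues

open MvPolynomial
open scoped Finset

variable {σ R : Type*} [CommRing R]

theorem homogeneousComponent_sub_C (f : MvPolynomial σ R) (v : R) {k : ℕ} (hk : k ≠ 0) :
    homogeneousComponent k (f - C v) = homogeneousComponent k f := by
  rw [map_sub, homogeneousComponent_eq_zero k (C v) (by simpa using hk.pos), sub_zero]

theorem exists_eval_ne_zero_and_eval_notMem [IsDomain R] [Finite σ] {f h : MvPolynomial σ R}
    {k d : ℕ} (hk : k ≠ 0) (hf : f.totalDegree ≤ k) (hh : h.totalDegree ≤ d) (V : Finset R)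
    {t : σ →₀ ℕ} (ht : t.degree = #V * k + d)
    (hcoeff : coeff t (homogeneousComponent k f ^ #V * homogeneousComponent d h) ≠ 0)
    (A : σ → Finset R) (hA : ∀ i, t i < #(A i)) :
    ∃ x : σ → R, (∀ i, x i ∈ A i) ∧ eval x h ≠ 0 ∧ eval x f ∉ V := by
  have hfactor : ∀ v ∈ V, (f - C v).totalDegree ≤ k := fun v _ ↦ (totalDegree_sub_C_le f v).trans hf
  have hprod : (∏ v ∈ V, (f - C v)).totalDegree ≤ #V * k := by
    simpa using (totalDegree_finsetProd V _).trans (Finset.sum_le_sum hfactor)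
  have hlead : homogeneousComponent (#V * k) (∏ v ∈ V, (f - C v)) =
      homogeneousComponent k f ^ #V := by
    simpa [homogeneousComponent_sub_C f _ hk] using
      homogeneousComponent_prod_of_totalDegree_le V _ _ hfactor
  set P := (∏ v ∈ V, (f - C v)) * h with hP
  have hPcoeff : coeff t P ≠ 0 := by
    rwa [← hlead, ← homogeneousComponent_mul_of_totalDegree_le hprod hh,
      coeff_homogeneousComponent, if_pos ht] at hcoeff
  have hPdeg : P.totalDegree = t.degree :=
    le_antisymm (((totalDegree_mul _ _).trans (add_le_add hprod hh)).trans ht.ge)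
      (le_totalDegree (mem_support_iff.2 hPcoeff))
  obtain ⟨x, hxA, hxP⟩ :=
    combinatorial_nullstellensatz_exists_eval_nonzero P t hPcoeff hPdeg A hA
  rw [hP, map_mul, map_prod, mul_ne_zero_iff, Finset.prod_ne_zero_iff] at hxP
  refine ⟨x, hxA, hxP.2, fun hxV ↦ hxP.1 _ hxV ?_⟩
  rw [map_sub, eval_C, sub_self]

end RestrictedValues

section Expand

open MvPolynomial

theorem coeff_expand_mul_monomial {σ R : Type*} [CommSemiring R] {k : ℕ} (hk : k ≠ 0) {r s : σ →₀ ℕ}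
    (hr : ∀ i, r i < k) (hs : ∀ i, s i < k) (m : σ →₀ ℕ) (p : MvPolynomial σ R) (c : R)
    [Decidable (s = r)] :
    coeff (k • m + r) (expand k p * monomial s c) = if s = r then coeff m p * c else 0 := by
  split_ifs with hsr
  · rw [hsr, coeff_mul_monomial, coeff_expand_smul k hk]
  · obtain ⟨i, hi⟩ := DFunLike.ne_iff.1 hsr
    rw [coeff_mul_monomial', ite_eq_right_iff]
    intro hle
    have hndvd : ¬ k ∣ (k • m + r - s) i := fun hdvd ↦ hi <| by
      have hmod : s i ≡ k * m i + r i [MOD k] := (Nat.modEq_iff_dvd' (hle i)).2 hdvd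
      exact (hmod.trans (by simp [Nat.ModEq])).eq_of_lt_of_lt (hs i) (hr i)
    rw [coeff_expand_of_not_dvd _ hndvd, zero_mul]

end Expand

section Vandermonde

open MvPolynomial Matrix

variable {n : ℕ}

/-- The exponent of the monomial `∏ i, x_i ^ τ(i)`, with coordinates counted from `0`, which is the
term of the permutation `τ` in the Vandermonde determinant of the variables. -/
noncomputable def permExponent (τ : Equiv.Perm (Fin n)) : Fin n →₀ ℕ :=
  Finsupp.equivFunOnFinite.symm fun i ↦ (τ i : ℕ)

@[simp]
theorem permExponent_apply (τ : Equiv.Perm (Fin n)) (i : Fin n) : permExponent τ i = τ i :=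
  rfl

theorem permExponent_injective : Function.Injective (permExponent (n := n)) := fun _ _ h ↦
  Equiv.ext fun i ↦ Fin.ext (DFunLike.congr_fun h i)

theorem degree_permExponent (τ : Equiv.Perm (Fin n)) :
    (permExponent τ).degree = ∑ i : Fin n, (i : ℕ) := by
  rw [Finsupp.degree_eq_sum]
  exact Equiv.sum_comp τ fun i : Fin n ↦ (i : ℕ)

theorem permExponent_lt {k : ℕ} (hnk : n ≤ k) (τ : Equiv.Perm (Fin n)) (i : Fin n) :
    permExponent τ i < k :=
  (τ i).isLt.trans_le hnk

variable {R : Type*} [CommRing R]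

theorem det_vandermonde_X_eq_sum_monomial :
    (vandermonde (X : Fin n → MvPolynomial (Fin n) R)).det =
      ∑ τ : Equiv.Perm (Fin n), monomial (permExponent τ) ((Equiv.Perm.sign τ : ℤ) : R) := by
  rw [← det_transpose, det_apply']
  refine Finset.sum_congr rfl fun τ _ ↦ ?_
  rw [monomial_eq, Finsupp.prod_fintype _ _ (by simp), map_intCast]
  rfl

theorem isHomogeneous_det_vandermonde_X :
    (vandermonde (X : Fin n → MvPolynomial (Fin n) R)).det.IsHomogeneous
      (∑ i : Fin n, (i : ℕ)) := by
  rw [det_vandermonde_X_eq_sum_monomial]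
  exact IsHomogeneous.sum _ _ _ fun τ _ ↦ isHomogeneous_monomial _ (degree_permExponent τ)

theorem eval_det_vandermonde_X (x : Fin n → R) :
    eval x (vandermonde (X : Fin n → MvPolynomial (Fin n) R)).det = (vandermonde x).det := by
  rw [RingHom.map_det]
  congr 1
  ext i j
  simp [vandermonde_apply]

theorem coeff_expand_mul_det_vandermonde_X {k : ℕ} (hk : k ≠ 0) (hnk : n ≤ k)
    (m : Fin n →₀ ℕ) (p : MvPolynomial (Fin n) R) :
    coeff (k • m + permExponent 1)
      (expand k p * (vandermonde (X : Fin n → MvPolynomial (Fin n) R)).det) = coeff m p := by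
  classical
  simp [det_vandermonde_X_eq_sum_monomial, Finset.mul_sum, coeff_sum,
    coeff_expand_mul_monomial hk (permExponent_lt hnk 1) (permExponent_lt hnk _),
    permExponent_injective.eq_iff]

end Vandermonde

section DiagonalForm

open MvPolynomial
open scoped Finset Nat

theorem natCast_multinomial_ne_zero {σ R : Type*} [Semiring R] {q : σ →₀ ℕ}
    (hq : (q.degree ! : R) ≠ 0) : (q.multinomial : R) ≠ 0 := by
  refine fun hzero ↦ hq ?_
  rw [Finsupp.degree_apply, ← Nat.multinomial_spec, ← Finsupp.multinomial_eq, Nat.cast_mul, hzero,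
    mul_zero]

theorem coeff_sum_C_mul_X_pow_ne_zero {σ R : Type*} [Fintype σ] [CommSemiring R]
    [NoZeroDivisors R] {a : σ → R} (ha : ∀ i, a i ≠ 0) {q : σ →₀ ℕ}
    (hq : (q.degree ! : R) ≠ 0) : coeff q ((∑ i, C (a i) * X i) ^ q.degree) ≠ 0 := by
  have : Nontrivial R := ⟨_, _, hq⟩
  simp only [← smul_eq_C_mul]
  rw [coeff_linearCombination_X_pow_of_fintype,
    if_pos (show q.sum (fun _ e ↦ e) = q.degree from rfl)]
  exact mul_ne_zero (natCast_multinomial_ne_zero hq)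
    (Finset.prod_ne_zero_iff.2 fun i _ ↦ pow_ne_zero _ (ha i))

theorem isHomogeneous_sum_C_mul_X_pow {σ R : Type*} [Fintype σ] [CommSemiring R] (a : σ → R)
    (k : ℕ) : (∑ i, C (a i) * X i ^ k).IsHomogeneous k :=
  IsHomogeneous.sum _ _ _ fun i _ ↦ isHomogeneous_C_mul_X_pow (a i) i k

theorem finite_setOf_eval_eq {σ S : Type*} [Finite σ] [CommSemiring S] (A : σ → Finset S)
    (P : (σ → S) → Prop) (f : MvPolynomial σ S) :
    {y | ∃ x : σ → S, (∀ i, x i ∈ A i) ∧ P x ∧ eval x f = y}.Finite :=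
  ((Set.Finite.pi' fun i ↦ (A i).finite_toSet).image fun x ↦ eval x f).subset
    fun _ ⟨x, hxA, _, hxy⟩ ↦ ⟨x, hxA, hxy⟩

variable {R : Type*} [CommRing R] [IsDomain R] {n k : ℕ}

theorem exists_injective_and_eval_notMem (hnk : n ≤ k) {a : Fin n → R} (ha : ∀ i, a i ≠ 0)
    {g : MvPolynomial (Fin n) R} (hg : g.totalDegree < k) (V : Finset R)
    (hV : ((#V)! : R) ≠ 0) {q : Fin n →₀ ℕ} (hq : q.degree = #V) (A : Fin n → Finset R)
    (hA : ∀ i, k * q i + i < #(A i)) :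
    ∃ x : Fin n → R, (∀ i, x i ∈ A i) ∧ Function.Injective x ∧
      eval x ((∑ i, C (a i) * X i ^ k) + g) ∉ V := by
  have hk : k ≠ 0 := Nat.ne_zero_of_lt hg
  have hlead := isHomogeneous_sum_C_mul_X_pow a k
  have hvand := isHomogeneous_det_vandermonde_X (n := n) (R := R)
  have hexpand : ∑ i, C (a i) * X i ^ k = expand k (∑ i, C (a i) * X i) := by simp
  have hdegree : (k • q + permExponent 1).degree = #V * k + ∑ i : Fin n, (i : ℕ) := by
    rw [map_add, map_nsmul, degree_permExponent, hq, smul_eq_mul, mul_comm]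
  have hcoeff : coeff (k • q + permExponent 1)
      (homogeneousComponent k (∑ i, C (a i) * X i ^ k + g) ^ #V *
        homogeneousComponent (∑ i : Fin n, (i : ℕ)) (Matrix.vandermonde X).det) ≠ 0 := by
    rw [homogeneousComponent_add_of_isHomogeneous hlead hg, homogeneousComponent_eq_self hvand,
      hexpand, ← map_pow, coeff_expand_mul_det_vandermonde_X hk hnk, ← hq]
    exact coeff_sum_C_mul_X_pow_ne_zero ha (hq ▸ hV)
  obtain ⟨x, hxA, hxinj, hxV⟩ := exists_eval_ne_zero_and_eval_notMem hk
    (totalDegree_add_le_of_isHomogeneous hlead hg) hvand.totalDegree_le V hdegree hcoeff A hA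
  rw [eval_det_vandermonde_X, Matrix.det_vandermonde_ne_zero_iff] at hxinj
  exact ⟨x, hxA, hxinj, hxV⟩

theorem stmt5_general (hnk : n ≤ k) {a : Fin n → R} (ha : ∀ i, a i ≠ 0)
    {g : MvPolynomial (Fin n) R} (hg : g.totalDegree < k) (A : Fin n → Finset R)
    (hA : ∀ i : Fin n, (i : ℕ) + 1 ≤ #(A i)) :
    min (ringCharE R) (((∑ i : Fin n, (#(A i) - ((i : ℕ) + 1)) / k : ℕ) + 1 : ℕ))
      ≤ (({y | ∃ x : Fin n → R, (∀ i, x i ∈ A i) ∧ Function.Injective x ∧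
            eval x ((∑ i, C (a i) * X i ^ k) + g) = y} : Set R).ncard : ℕ∞) := by
  have hfin := finite_setOf_eval_eq A Function.Injective ((∑ i, C (a i) * X i ^ k) + g)
  rw [Set.ncard_eq_toFinset_card _ hfin]
  set V := hfin.toFinset
  by_contra! hlt
  obtain ⟨hchar, hcard⟩ := lt_min_iff.1 hlt
  let bound : Fin n →₀ ℕ := Finsupp.equivFunOnFinite.symm fun i ↦ (#(A i) - ((i : ℕ) + 1)) / k
  have hVbound : #V ≤ bound.degree := by
    rw [Finsupp.degree_eq_sum]
    exact Nat.lt_succ_iff.1 (Nat.cast_lt.1 hcard)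
  obtain ⟨q, hqbound, hq⟩ := Finsupp.exists_le_degree_eq bound #V hVbound
  have hqA : ∀ i, k * q i + i < #(A i) := fun i ↦ by
    have hqi : k * q i ≤ #(A i) - ((i : ℕ) + 1) :=
      (Nat.mul_le_mul_left k (hqbound i)).trans (Nat.mul_div_le _ k)
    have hAi := hA i
    lia
  obtain ⟨x, hxA, hxinj, hxV⟩ := exists_injective_and_eval_notMem hnk ha hg V
    (natCast_factorial_ne_zero_of_lt_ringCharE hchar) hq A hqA
  exact hxV (hfin.mem_toFinset.2 ⟨x, hxA, hxinj, rfl⟩)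

end DiagonalForm

theorem stmt5 {F : Type*} [Field F] (n k : ℕ) (hk : 0 < k) (hnk : n ≤ k)
    (a : Fin n → F) (ha : ∀ i, a i ≠ 0)
    (g f : MvPolynomial (Fin n) F) (hg : g.totalDegree < k)
    (hf : f = (∑ i, MvPolynomial.C (a i) * MvPolynomial.X i ^ k) + g)
    (A : Fin n → Finset F) (hA : ∀ i : Fin n, (i : ℕ) + 1 ≤ (A i).card) :
    min (fieldCharE F) (((∑ i : Fin n, ((A i).card - ((i : ℕ) + 1)) / k : ℕ) + 1 : ℕ))
      ≤ (({y | ∃ x : Fin n → F, (∀ i, x i ∈ A i) ∧ Function.Injective x ∧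
            MvPolynomial.eval x f = y} : Set F).ncard : ℕ∞) := by
  subst hf
  exact stmt5_general hnk ha hg A hA
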